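/- arXiv:0901.3599 — 2 statements merged into one kernel-verified Lean document; each statement's English description precedes it below -/
import Mathlib

section
/- Every integral lattice L in ℝ^4 with Λ4 ⊆ L is isometric (via a linear isometry of ℝ^4) to one of the six lattices: Λ4; Λ4 + ℤ·ε1; Λ4 + ℤ·ε1 + ℤ·ε2; (A1)^4 = {x ∈ ℤ^4 : x1+x2 and x3+x4 are even}; D4 = {x ∈ ℤ^4 : x1+x2+x3+x4 is even}; and ℤ^4. -/
noncomputable section

open scoped RealInnerProductSpace

/-- `ℝ^n` with the standard inner product. -/
abbrev E (n : ℕ) := EuclideanSpace ℝ (Fin n)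

/-- The standard basis vector `ε i`. -/
def εv {n : ℕ} (i : Fin n) : E n := EuclideanSpace.single i 1

/-- The vector of `ℝ^n` with the given coordinates. -/
def vec {n : ℕ} (x : Fin n → ℝ) : E n := (WithLp.equiv 2 (Fin n → ℝ)).symm x

/-- The vector of `ℝ^n` with the given integer coordinates. -/
def intVec {n : ℕ} (x : Fin n → ℤ) : E n := (WithLp.equiv 2 (Fin n → ℝ)).symm fun i => (x i : ℝ)

/-- A lattice is integral if all pairwise inner products of its elements are integers. -/
def LatticeIsIntegral {n : ℕ} (L : Submodule ℤ (E n)) : Prop :=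
  ∀ x ∈ L, ∀ y ∈ L, ∃ k : ℤ, ⟪x, y⟫ = (k : ℝ)

/-- Two lattices are isometric if a linear isometry of the ambient space carries
one onto the other. -/
def IsometricLattices {n : ℕ} (L M : Submodule ℤ (E n)) : Prop :=
  ∃ g : E n ≃ₗᵢ[ℝ] E n, g '' (L : Set (E n)) = (M : Set (E n))

/-- The laminated lattice `Λ₄`, the ℤ-span of `2ε1, 2ε2, 2ε3, ε1+ε2+ε3+ε4`, i.e.
`{x ∈ ℤ⁴ : x 0 ≡ x 1 ≡ x 2 ≡ x 3 (mod 2)} ≅ √2·D₄`. -/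
def Λ4 : Submodule ℤ (E 4) :=
  Submodule.span ℤ {(2 : ℝ) • εv 0, (2 : ℝ) • εv 1, (2 : ℝ) • εv 2, εv 0 + εv 1 + εv 2 + εv 3}

/-- `(A₁)⁴ = {x ∈ ℤ⁴ : x1+x2 and x3+x4 are even}`. -/
def latA1 : Submodule ℤ (E 4) :=
  Submodule.span ℤ
    {v : E 4 | ∃ x : Fin 4 → ℤ, Even (x 0 + x 1) ∧ Even (x 2 + x 3) ∧ v = intVec x}

/-- `D₄ = {x ∈ ℤ⁴ : x1+x2+x3+x4 is even}`. -/
def latD4 : Submodule ℤ (E 4) :=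
  Submodule.span ℤ {v : E 4 | ∃ x : Fin 4 → ℤ, Even (x 0 + x 1 + x 2 + x 3) ∧ v = intVec x}

/-- `ℤ⁴`. -/
def latZ4 : Submodule ℤ (E 4) :=
  Submodule.span ℤ {v : E 4 | ∃ x : Fin 4 → ℤ, v = intVec x}

section Helpers

lemma intVec_apply {n : ℕ} (z : Fin n → ℤ) (i : Fin n) : intVec z i = (z i : ℝ) := rfl

lemma inner4 (x y : E 4) : ⟪x, y⟫ = x 0 * y 0 + x 1 * y 1 + x 2 * y 2 + x 3 * y 3 := by
  simp only [PiLp.inner_apply, Fin.sum_univ_four]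
  simp [mul_comm]

lemma intVec_add {n : ℕ} (z w : Fin n → ℤ) : intVec (z + w) = intVec z + intVec w := by
  ext i; simp [intVec_apply]

lemma intVec_neg {n : ℕ} (z : Fin n → ℤ) : intVec (-z) = -intVec z := by
  ext i; simp [intVec_apply]

lemma intVec_smul {n : ℕ} (k : ℤ) (z : Fin n → ℤ) : intVec (k • z) = k • intVec z := by
  ext i; simp [intVec_apply]

lemma intVec_zero {n : ℕ} : intVec (0 : Fin n → ℤ) = 0 := by
  ext i; simp [intVec_apply]

lemma εv_eq (i : Fin 4) : εv i = intVec (Pi.single i 1) := by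
  ext j
  by_cases h : j = i <;> simp [εv, intVec_apply, h]

/-- The integral vectors satisfying an additive-subgroup condition. -/
def codeLat (C : AddSubgroup (Fin 4 → ℤ)) : Submodule ℤ (E 4) where
  carrier := {v | ∃ z, v = intVec z ∧ z ∈ C}
  add_mem' := by
    rintro a b ⟨z, rfl, hz⟩ ⟨w, rfl, hw⟩
    exact ⟨z + w, (intVec_add z w).symm, C.add_mem hz hw⟩
  zero_mem' := ⟨0, intVec_zero.symm, C.zero_mem⟩
  smul_mem' := by
    rintro k a ⟨z, rfl, hz⟩
    exact ⟨k • z, (intVec_smul k z).symm, C.zsmul_mem hz k⟩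

lemma span_intVec (p : (Fin 4 → ℤ) → Prop) (C : AddSubgroup (Fin 4 → ℤ))
    (hp : ∀ z, z ∈ C ↔ p z) (S : Submodule ℤ (E 4))
    (h1 : ∀ z, p z → intVec z ∈ S) (h2 : S ≤ codeLat C) (x : E 4) :
    x ∈ S ↔ ∃ z, x = intVec z ∧ p z := by
  constructor
  · intro hx
    obtain ⟨z, rfl, hz⟩ := h2 hx
    exact ⟨z, rfl, (hp z).1 hz⟩
  · rintro ⟨z, rfl, hz⟩
    exact h1 z hz

lemma mem_Z4 (x : E 4) : x ∈ latZ4 ↔ ∃ z, x = intVec z ∧ True := by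
  refine span_intVec _ ⊤ (by simp) _ (fun z _ => Submodule.subset_span (show ∃ x, intVec z = intVec x from ⟨z, rfl⟩)) ?_ x
  refine Submodule.span_le.2 ?_
  rintro _ ⟨z, rfl⟩
  exact ⟨z, rfl, trivial⟩

lemma mem_D4 (x : E 4) :
    x ∈ latD4 ↔ ∃ z, x = intVec z ∧ (z 0 + z 1 + z 2 + z 3) % 2 = 0 := by
  refine span_intVec _
    { carrier := {z | (z 0 + z 1 + z 2 + z 3) % 2 = 0}
      add_mem' := by intro a b ha hb; simp only [Set.mem_ofPred_eq, Pi.add_apply] at *; omega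
      zero_mem' := by simp
      neg_mem' := by intro a ha; simp only [Set.mem_ofPred_eq, Pi.neg_apply] at *; omega }
    (fun z => Iff.rfl) _ (fun z hz => Submodule.subset_span (show ∃ x, _ from ⟨z, Int.even_iff.2 hz, rfl⟩)) ?_ x
  refine Submodule.span_le.2 ?_
  rintro _ ⟨z, hz, rfl⟩
  exact ⟨z, rfl, Int.even_iff.1 hz⟩

lemma mem_A1 (x : E 4) :
    x ∈ latA1 ↔ ∃ z, x = intVec z ∧ ((z 0 + z 1) % 2 = 0 ∧ (z 2 + z 3) % 2 = 0) := by
  refine span_intVec _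
    { carrier := {z | (z 0 + z 1) % 2 = 0 ∧ (z 2 + z 3) % 2 = 0}
      add_mem' := by intro a b ha hb; simp only [Set.mem_ofPred_eq, Pi.add_apply] at *; omega
      zero_mem' := by simp
      neg_mem' := by intro a ha; simp only [Set.mem_ofPred_eq, Pi.neg_apply] at *; omega }
    (fun z => Iff.rfl) _
    (fun z hz => Submodule.subset_span
      (show ∃ x, _ from ⟨z, Int.even_iff.2 hz.1, Int.even_iff.2 hz.2, rfl⟩)) ?_ x
  refine Submodule.span_le.2 ?_
  rintro _ ⟨z, hz, hz', rfl⟩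
  exact ⟨z, rfl, Int.even_iff.1 hz, Int.even_iff.1 hz'⟩

lemma gen_mem : (∀ i : Fin 4, intVec (2 • Pi.single i 1) ∈ Λ4) ∧ intVec (fun _ => 1) ∈ Λ4 := by
  have h0 : (2 : ℝ) • εv 0 ∈ Λ4 := Submodule.subset_span (by simp)
  have h1 : (2 : ℝ) • εv 1 ∈ Λ4 := Submodule.subset_span (by simp)
  have h2 : (2 : ℝ) • εv 2 ∈ Λ4 := Submodule.subset_span (by simp)
  have h3 : (εv 0 + εv 1 + εv 2 + εv 3 : E 4) ∈ Λ4 := Submodule.subset_span (by simp)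
  have e : ∀ i : Fin 4, intVec (2 • Pi.single i 1) = (2 : ℝ) • εv i := by
    intro i; rw [εv_eq]; ext j; simp [intVec_apply]
  have h4 : (2 : ℝ) • εv 3 ∈ Λ4 := by
    have : (2 : ℝ) • εv 3 = (2 : ℤ) • (εv 0 + εv 1 + εv 2 + εv 3 : E 4)
      - (2 : ℝ) • εv 0 - (2 : ℝ) • εv 1 - (2 : ℝ) • εv 2 := by
      module
    rw [this]
    exact Λ4.sub_mem (Λ4.sub_mem (Λ4.sub_mem (Λ4.smul_mem _ h3) h0) h1) h2
  refine ⟨fun i => ?_, ?_⟩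
  · rw [e]; fin_cases i <;> assumption
  · convert h3 using 1
    simp only [εv_eq]
    ext j; fin_cases j <;> simp [intVec_apply]

lemma even_mem (z : Fin 4 → ℤ) (hz : ∀ i, z i % 2 = 0) : intVec z ∈ Λ4 := by
  have : z = ∑ i, (z i / 2) • (2 • Pi.single i 1 : Fin 4 → ℤ) := by
    ext j
    have := hz j
    fin_cases j <;> simp [Fin.sum_univ_four] <;> simp at this <;> omega
  rw [this, Fin.sum_univ_four]
  simp only [intVec_add, intVec_smul]
  have h := gen_mem.1
  exact Λ4.add_mem (Λ4.add_mem (Λ4.add_mem (Λ4.smul_mem _ (h 0)) (Λ4.smul_mem _ (h 1)))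
    (Λ4.smul_mem _ (h 2))) (Λ4.smul_mem _ (h 3))

lemma mem_of_parity {S : Submodule ℤ (E 4)} (hS : Λ4 ≤ S) {z w : Fin 4 → ℤ}
    (hw : intVec w ∈ S) (h : ∀ i, (z i - w i) % 2 = 0) : intVec z ∈ S := by
  have : z = w + (z - w) := by abel
  rw [this, intVec_add]
  exact S.add_mem hw (hS (even_mem _ h))

/-- same parity condition -/
def pΛ (z : Fin 4 → ℤ) : Prop :=
  (z 0 + z 1) % 2 = 0 ∧ (z 0 + z 2) % 2 = 0 ∧ (z 0 + z 3) % 2 = 0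

def pB (z : Fin 4 → ℤ) : Prop := (z 1 + z 2) % 2 = 0 ∧ (z 1 + z 3) % 2 = 0

def pC (z : Fin 4 → ℤ) : Prop := (z 2 + z 3) % 2 = 0

def cΛ : AddSubgroup (Fin 4 → ℤ) where
  carrier := {z | pΛ z}
  add_mem' := by intro a b ha hb; simp only [Set.mem_ofPred_eq, pΛ, Pi.add_apply] at *; omega
  zero_mem' := by simp [pΛ]
  neg_mem' := by intro a ha; simp only [Set.mem_ofPred_eq, pΛ, Pi.neg_apply] at *; omega

def cB : AddSubgroup (Fin 4 → ℤ) where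
  carrier := {z | pB z}
  add_mem' := by intro a b ha hb; simp only [Set.mem_ofPred_eq, pB, Pi.add_apply] at *; omega
  zero_mem' := by simp [pB]
  neg_mem' := by intro a ha; simp only [Set.mem_ofPred_eq, pB, Pi.neg_apply] at *; omega

def cC : AddSubgroup (Fin 4 → ℤ) where
  carrier := {z | pC z}
  add_mem' := by intro a b ha hb; simp only [Set.mem_ofPred_eq, pC, Pi.add_apply] at *; omega
  zero_mem' := by simp [pC]
  neg_mem' := by intro a ha; simp only [Set.mem_ofPred_eq, pC, Pi.neg_apply] at *; omega

lemma Λ4_le (C : AddSubgroup (Fin 4 → ℤ)) (h : ∀ z, pΛ z → z ∈ C) : Λ4 ≤ codeLat C := by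
  have e : ∀ i : Fin 4, (2 : ℝ) • εv i = intVec (2 • Pi.single i 1) := by
    intro i; rw [εv_eq]; ext j; simp [intVec_apply]
  refine Submodule.span_le.2 ?_
  rintro x (rfl | rfl | rfl | rfl)
  · exact ⟨_, e 0, h _ (by simp [pΛ])⟩
  · exact ⟨_, e 1, h _ (by simp [pΛ])⟩
  · exact ⟨_, e 2, h _ (by simp [pΛ])⟩
  · refine ⟨fun _ => 1, ?_, h _ (by simp [pΛ])⟩
    simp only [εv_eq]
    ext j; fin_cases j <;> simp [intVec_apply]

lemma pΛ_mem (z : Fin 4 → ℤ) (hz : pΛ z) : intVec z ∈ Λ4 := by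
  obtain ⟨h1, h2, h3⟩ := hz
  refine mem_of_parity le_rfl (w := z 0 • fun _ => 1) ?_ ?_
  · rw [intVec_smul]; exact Λ4.smul_mem _ gen_mem.2
  · intro i; fin_cases i <;> simp <;> omega

lemma mem_Λ4 (x : E 4) : x ∈ Λ4 ↔ ∃ z, x = intVec z ∧ pΛ z :=
  span_intVec _ cΛ (fun _ => Iff.rfl) _ pΛ_mem (Λ4_le _ fun _ h => h) x

lemma mem_B (x : E 4) :
    x ∈ Λ4 ⊔ Submodule.span ℤ {εv 0} ↔ ∃ z, x = intVec z ∧ pB z := by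
  refine span_intVec _ cB (fun _ => Iff.rfl) _ ?_ ?_ x
  · rintro z ⟨h1, h2⟩
    refine mem_of_parity le_sup_left
      (w := (z 1 • fun _ => 1) + (z 0 - z 1) • Pi.single 0 1) ?_ ?_
    · rw [intVec_add, intVec_smul, intVec_smul, ← εv_eq]
      exact Submodule.add_mem_sup (Submodule.smul_mem _ _ gen_mem.2)
        (Submodule.smul_mem _ _ (Submodule.subset_span (by simp)))
    · intro i; fin_cases i <;> simp <;> omega
  · refine sup_le (Λ4_le _ fun z h => ?_) (Submodule.span_le.2 ?_)
    · show pB z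
      obtain ⟨h1, h2, h3⟩ := h
      constructor <;> omega
    · rintro _ rfl
      exact ⟨_, εv_eq 0, by show pB _; simp [pB]⟩

lemma mem_C (x : E 4) :
    x ∈ Λ4 ⊔ Submodule.span ℤ {εv 0, εv 1} ↔ ∃ z, x = intVec z ∧ pC z := by
  refine span_intVec _ cC (fun _ => Iff.rfl) _ ?_ ?_ x
  · rintro z h1
    change (z 2 + z 3) % 2 = 0 at h1
    refine mem_of_parity le_sup_left
      (w := (z 2 • fun _ => 1) + ((z 0 - z 2) • Pi.single 0 1 + (z 1 - z 2) • Pi.single 1 1)) ?_ ?_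
    · rw [intVec_add, intVec_add, intVec_smul, intVec_smul, intVec_smul, ← εv_eq, ← εv_eq]
      exact Submodule.add_mem_sup (Submodule.smul_mem _ _ gen_mem.2)
        (Submodule.add_mem _ (Submodule.smul_mem _ _ (Submodule.subset_span (by simp)))
          (Submodule.smul_mem _ _ (Submodule.subset_span (by simp))))
    · intro i; fin_cases i <;> simp <;> omega
  · refine sup_le (Λ4_le _ fun z h => ?_) (Submodule.span_le.2 ?_)
    · show pC z
      obtain ⟨h1, h2, h3⟩ := h
      unfold pC; omega
    · rintro _ (rfl | rfl)
      · exact ⟨_, εv_eq 0, by show pC _; simp [pC]⟩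
      · exact ⟨_, εv_eq 1, by show pC _; simp [pC]⟩

lemma finish (σ : Equiv.Perm (Fin 4)) (p : (Fin 4 → ℤ) → Prop) (L M : Submodule ℤ (E 4))
    (hM : ∀ x, x ∈ M ↔ ∃ z, x = intVec z ∧ p z) (hL : ∀ x ∈ L, ∃ z, x = intVec z)
    (h : ∀ z, intVec z ∈ L ↔ p (fun i => z (σ i))) : IsometricLattices L M := by
  have key : ∀ z, LinearIsometryEquiv.piLpCongrLeft 2 ℝ ℝ σ.symm (intVec z)
      = intVec (fun i => z (σ i)) := by
    intro z
    ext i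
    simp [intVec_apply, LinearIsometryEquiv.piLpCongrLeft_apply]
  refine ⟨LinearIsometryEquiv.piLpCongrLeft 2 ℝ ℝ σ.symm, ?_⟩
  ext x
  constructor
  · rintro ⟨y, hy, rfl⟩
    obtain ⟨z, rfl⟩ := hL y hy
    rw [key]
    exact (hM _).2 ⟨_, rfl, (h z).1 hy⟩
  · intro hx
    obtain ⟨z, rfl, hz⟩ := (hM x).1 hx
    refine ⟨intVec fun i => z (σ.symm i), (h _).2 (by simpa using hz), ?_⟩
    rw [key]; simp

/-- code determined by its values on the seven nontrivial classes -/
def F (a0 a1 a2 a3 b1 b2 b3 : Bool) : Bool → Bool → Bool → Bool → Bool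
  | false, false, false, false => true
  | true, true, true, true => true
  | true, false, false, false => a0
  | false, true, true, true => a0
  | false, true, false, false => a1
  | true, false, true, true => a1
  | false, false, true, false => a2
  | true, true, false, true => a2
  | false, false, false, true => a3
  | true, true, true, false => a3
  | true, true, false, false => b1
  | false, false, true, true => b1
  | true, false, true, false => b2
  | false, true, false, true => b2
  | true, false, false, true => b3
  | false, true, true, false => b3

/-- agreement of a code with another after permutation -/
abbrev Agree (q c : Bool → Bool → Bool → Bool → Bool) (σ : Equiv.Perm (Fin 4)) : Prop :=
  ∀ x y z w : Bool, q x y z w =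
    c (![x, y, z, w] (σ 0)) (![x, y, z, w] (σ 1)) (![x, y, z, w] (σ 2)) (![x, y, z, w] (σ 3))

set_option maxRecDepth 100000 in
lemma comb : ∀ a0 a1 a2 a3 b1 b2 b3 : Bool,
    (a0 && a1) ≤ b1 → (a0 && a2) ≤ b2 → (a0 && a3) ≤ b3 →
    (a2 && a3) ≤ b1 → (a1 && a3) ≤ b2 → (a1 && a2) ≤ b3 →
    (a0 && b1) ≤ a1 → (a1 && b1) ≤ a0 → (a2 && b1) ≤ a3 → (a3 && b1) ≤ a2 →
    (a0 && b2) ≤ a2 → (a2 && b2) ≤ a0 → (a1 && b2) ≤ a3 → (a3 && b2) ≤ a1 →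
    (a0 && b3) ≤ a3 → (a3 && b3) ≤ a0 → (a1 && b3) ≤ a2 → (a2 && b3) ≤ a1 →
    (b1 && b2) ≤ b3 → (b1 && b3) ≤ b2 → (b2 && b3) ≤ b1 →
    ∃ i j : Fin 4,
      Agree (F a0 a1 a2 a3 b1 b2 b3) (fun x y z w => x == y && (x == z && x == w))
        (Equiv.swap 0 i * Equiv.swap 1 j) ∨
      Agree (F a0 a1 a2 a3 b1 b2 b3) (fun _ y z w => y == z && y == w)
        (Equiv.swap 0 i * Equiv.swap 1 j) ∨
      Agree (F a0 a1 a2 a3 b1 b2 b3) (fun _ _ z w => z == w)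
        (Equiv.swap 0 i * Equiv.swap 1 j) ∨
      Agree (F a0 a1 a2 a3 b1 b2 b3) (fun x y z w => x == y && z == w)
        (Equiv.swap 0 i * Equiv.swap 1 j) ∨
      Agree (F a0 a1 a2 a3 b1 b2 b3) (fun x y z w => (x ^^ y) == (z ^^ w))
        (Equiv.swap 0 i * Equiv.swap 1 j) ∨
      Agree (F a0 a1 a2 a3 b1 b2 b3) (fun _ _ _ _ => true)
        (Equiv.swap 0 i * Equiv.swap 1 j) := by
  decide

lemma comb' (q : Bool → Bool → Bool → Bool → Bool) (h0 : q false false false false = true)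
    (h1 : q true true true true = true)
    (hq : ∀ x y z w x' y' z' w', q x y z w = true → q x' y' z' w' = true →
      q (x ^^ x') (y ^^ y') (z ^^ z') (w ^^ w') = true) :
    ∃ σ : Equiv.Perm (Fin 4),
      Agree q (fun x y z w => x == y && (x == z && x == w)) σ ∨
      Agree q (fun _ y z w => y == z && y == w) σ ∨
      Agree q (fun _ _ z w => z == w) σ ∨
      Agree q (fun x y z w => x == y && z == w) σ ∨
      Agree q (fun x y z w => (x ^^ y) == (z ^^ w)) σ ∨
      Agree q (fun _ _ _ _ => true) σ := by
  have hc : ∀ x y z w, q (!x) (!y) (!z) (!w) = q x y z w := by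
    intro x y z w
    rw [Bool.eq_iff_iff]
    constructor
    · intro h; simpa using hq _ _ _ _ _ _ _ _ h h1
    · intro h; simpa using hq _ _ _ _ _ _ _ _ h h1
  have hF : q = F (q true false false false) (q false true false false) (q false false true false)
      (q false false false true) (q true true false false) (q true false true false)
      (q true false false true) := by
    funext x y z w
    cases x <;> cases y <;> cases z <;> cases w <;> simp only [F, h0, h1] <;>
      first
      | rfl
      | exact hc true false false false
      | exact hc false true false false
      | exact hc false false true false
      | exact hc false false false true
      | exact hc true true false false
      | exact hc true false true false
      | exact hc true false false true
  have hle : ∀ x y z w x' y' z' w', (q x y z w && q x' y' z' w') ≤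
      q (x ^^ x') (y ^^ y') (z ^^ z') (w ^^ w') := by
    intro x y z w x' y' z' w'
    have := hq x y z w x' y' z' w'
    intro hand
    rw [Bool.and_eq_true] at hand
    exact this hand.1 hand.2
  have hle' : ∀ x y z w x' y' z' w', (q x y z w && q x' y' z' w') ≤
      q (!(x ^^ x')) (!(y ^^ y')) (!(z ^^ z')) (!(w ^^ w')) := by
    intro x y z w x' y' z' w'
    rw [hc]; exact hle _ _ _ _ _ _ _ _
  obtain ⟨i, j, h⟩ := comb (q true false false false) (q false true false false)
    (q false false true false)
    (q false false false true) (q true true false false) (q true false true false)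
    (q true false false true) (hle _ _ _ _ _ _ _ _) (hle _ _ _ _ _ _ _ _) (hle _ _ _ _ _ _ _ _) (hle' _ _ _ _ _ _ _ _) (hle' _ _ _ _ _ _ _ _) (hle' _ _ _ _ _ _ _ _)
    (hle _ _ _ _ _ _ _ _) (hle _ _ _ _ _ _ _ _) (hle' _ _ _ _ _ _ _ _) (hle' _ _ _ _ _ _ _ _)
    (hle _ _ _ _ _ _ _ _) (hle _ _ _ _ _ _ _ _) (hle' _ _ _ _ _ _ _ _) (hle' _ _ _ _ _ _ _ _)
    (hle _ _ _ _ _ _ _ _) (hle _ _ _ _ _ _ _ _) (hle' _ _ _ _ _ _ _ _) (hle' _ _ _ _ _ _ _ _)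
    (hle' _ _ _ _ _ _ _ _) (hle' _ _ _ _ _ _ _ _) (hle' _ _ _ _ _ _ _ _)
  rw [← hF] at h
  exact ⟨_, h⟩

/-- parity -/
def par (n : ℤ) : Bool := decide (n % 2 = 1)

lemma par_beq (a b : ℤ) : (par a == par b) = true ↔ (a + b) % 2 = 0 := by
  unfold par
  rw [beq_iff_eq, Bool.eq_iff_iff, decide_eq_true_iff, decide_eq_true_iff]
  omega

lemma par_xor (a b : ℤ) : (par a ^^ par b) = par (a + b) := by
  unfold par
  rcases Int.emod_two_eq_zero_or_one a with h | h <;>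
  rcases Int.emod_two_eq_zero_or_one b with h' | h' <;> simp [h, h', Int.add_emod]

def bi (b : Bool) : ℤ := if b then 1 else 0

lemma par_bi (b : Bool) : par (bi b) = b := by cases b <;> simp [par, bi]

lemma Agree.vec_eq (z : Fin 4 → ℤ) (k : Fin 4) :
    ![par (z 0), par (z 1), par (z 2), par (z 3)] k = par (z k) := by
  fin_cases k <;> rfl

lemma int_case (L : Submodule ℤ (E 4)) (hΛ : Λ4 ≤ L) (hL : ∀ x ∈ L, ∃ z, x = intVec z) :
    IsometricLattices L Λ4 ∨
    IsometricLattices L (Λ4 ⊔ Submodule.span ℤ {εv 0}) ∨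
    IsometricLattices L (Λ4 ⊔ Submodule.span ℤ {εv 0, εv 1}) ∨
    IsometricLattices L latA1 ∨
    IsometricLattices L latD4 ∨
    IsometricLattices L latZ4 := by
  classical
  let q : Bool → Bool → Bool → Bool → Bool :=
    fun x y z w => decide (intVec ![bi x, bi y, bi z, bi w] ∈ L)
  have hpar : ∀ a b : ℤ, par a = par b → (a - b) % 2 = 0 := by
    intro a b h
    have := (par_beq a b).1 (by simp [h])
    omega
  have hq : ∀ z, intVec z ∈ L ↔ q (par (z 0)) (par (z 1)) (par (z 2)) (par (z 3)) = true := by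
    intro z
    simp only [q, decide_eq_true_iff]
    constructor
    · intro h
      refine mem_of_parity hΛ h fun i => hpar _ _ ?_
      fin_cases i <;> simp [par_bi]
    · intro h
      refine mem_of_parity hΛ h fun i => hpar _ _ ?_
      fin_cases i <;> simp [par_bi]
  obtain ⟨σ, h⟩ := comb' q
    (by have := (hq 0).1 (by rw [intVec_zero]; exact L.zero_mem); simpa [par] using this)
    (by have := (hq _).1 (hΛ gen_mem.2); simpa [par] using this)
    (by
      intro x y z w x' y' z' w' h h'
      simp only [q, decide_eq_true_iff] at h h'
      have := (hq _).1 (by rw [intVec_add]; exact L.add_mem h h')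
      simpa [← par_xor, par_bi] using this)
  have hz : ∀ c, Agree q c σ → ∀ z : Fin 4 → ℤ, intVec z ∈ L ↔
      c (par (z (σ 0))) (par (z (σ 1))) (par (z (σ 2))) (par (z (σ 3))) = true := by
    intro c hc z
    rw [hq, hc]
    simp only [Agree.vec_eq]
  rcases h with h | h | h | h | h | h
  · refine Or.inl (finish σ _ L _ mem_Λ4 hL fun z => ?_)
    rw [hz _ h]; simp only [Bool.and_eq_true, par_beq, pΛ]
  · refine Or.inr (Or.inl (finish σ _ L _ mem_B hL fun z => ?_))
    rw [hz _ h]; simp only [Bool.and_eq_true, par_beq, pB]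
  · refine Or.inr (Or.inr (Or.inl (finish σ _ L _ mem_C hL fun z => ?_)))
    rw [hz _ h]; simp only [par_beq, pC]
  · refine Or.inr (Or.inr (Or.inr (Or.inl (finish σ _ L _ mem_A1 hL fun z => ?_))))
    rw [hz _ h]; simp only [Bool.and_eq_true, par_beq]
  · refine Or.inr (Or.inr (Or.inr (Or.inr (Or.inl (finish σ _ L _ mem_D4 hL fun z => ?_)))))
    rw [hz _ h]; simp only [par_xor, par_beq, add_assoc]
  · refine Or.inr (Or.inr (Or.inr (Or.inr (Or.inr (finish σ _ L _ mem_Z4 hL fun z => ?_)))))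
    rw [hz _ h]; simp

lemma arith (a b c d m k : ℤ) (h : a * a + b * b + c * c + d * d = 4 * m)
    (hs : a + b + c + d = 2 * k) :
    (a % 2 = 0 ∧ b % 2 = 0 ∧ c % 2 = 0 ∧ d % 2 = 0) ∨
    (a % 2 = 1 ∧ b % 2 = 1 ∧ c % 2 = 1 ∧ d % 2 = 1) := by
  have sq : ∀ n : ℤ, (n % 2 = 0 ∧ (n * n) % 4 = 0) ∨ (n % 2 = 1 ∧ (n * n) % 4 = 1) := by
    intro n
    rcases Int.emod_two_eq_zero_or_one n with h | h
    · left
      refine ⟨h, ?_⟩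
      obtain ⟨t, rfl⟩ : ∃ t, n = 2 * t := ⟨n / 2, by omega⟩
      have : 2 * t * (2 * t) = 4 * (t * t) := by ring
      omega
    · right
      refine ⟨h, ?_⟩
      obtain ⟨t, rfl⟩ : ∃ t, n = 2 * t + 1 := ⟨n / 2, by omega⟩
      have : (2 * t + 1) * (2 * t + 1) = 4 * (t * t + t) + 1 := by ring
      omega
  have := sq a
  have := sq b
  have := sq c
  have := sq d
  generalize a * a = A at *
  generalize b * b = B at *
  generalize c * c = C at *
  generalize d * d = D at *
  omega

/-- Every element of `L` is half of an integral vector whose coordinates share a parity. -/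
lemma half (L : Submodule ℤ (E 4)) (hL : LatticeIsIntegral L) (hΛ : Λ4 ≤ L) (x : E 4)
    (hx : x ∈ L) : ∃ n : Fin 4 → ℤ, (∀ i, x i = n i / 2) ∧
      ((∀ i, n i % 2 = 0) ∨ (∀ i, n i % 2 = 1)) := by
  have h1 : ∀ i, ∃ k : ℤ, x i = k / 2 := by
    intro i
    obtain ⟨k, hk⟩ := hL x hx _ (hΛ (gen_mem.1 i))
    refine ⟨k, ?_⟩
    rw [← hk, inner4]
    fin_cases i <;> simp [intVec_apply]
  choose n hn using h1
  obtain ⟨k, hk⟩ := hL x hx _ (hΛ gen_mem.2)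
  obtain ⟨m, hm⟩ := hL x hx x hx
  rw [inner4] at hk hm
  simp only [hn, intVec_apply] at hk hm
  have hm' : n 0 * n 0 + n 1 * n 1 + n 2 * n 2 + n 3 * n 3 = 4 * m := by
    have : (n 0 * n 0 + n 1 * n 1 + n 2 * n 2 + n 3 * n 3 : ℝ) = 4 * m := by linarith
    exact_mod_cast this
  have hk' : n 0 + n 1 + n 2 + n 3 = 2 * k := by
    have : (n 0 + n 1 + n 2 + n 3 : ℝ) = 2 * k := by push_cast at hk; linarith
    exact_mod_cast this
  refine ⟨n, hn, ?_⟩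
  rcases arith _ _ _ _ _ _ hm' hk' with ⟨h0, h1, h2, h3⟩ | ⟨h0, h1, h2, h3⟩
  · left; intro i; fin_cases i <;> assumption
  · right; intro i; fin_cases i <;> assumption

lemma int_of_even (x : E 4) (n : Fin 4 → ℤ) (hn : ∀ i, x i = n i / 2)
    (h : ∀ i, n i % 2 = 0) : ∃ z, x = intVec z := by
  refine ⟨fun i => n i / 2, ?_⟩
  ext i
  rw [hn, intVec_apply]
  have : n i = 2 * (n i / 2) := by have := h i; omega
  have h' : (n i : ℝ) = 2 * ((n i / 2 : ℤ) : ℝ) := by exact_mod_cast this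
  rw [h']; ring

lemma int_of_odd_mem (L : Submodule ℤ (E 4)) (hL : LatticeIsIntegral L) (hΛ : Λ4 ≤ L)
    (e : Fin 4 → ℤ) (he : intVec e ∈ L) (hodd : (e 0 + e 1 + e 2 + e 3) % 2 = 1) :
    ∀ x ∈ L, ∃ z, x = intVec z := by
  intro x hx
  obtain ⟨n, hn, h | h⟩ := half L hL hΛ x hx
  · exact int_of_even x n hn h
  · exfalso
    obtain ⟨k, hk⟩ := hL x hx _ he
    rw [inner4] at hk
    simp only [hn, intVec_apply] at hk
    have hk' : n 0 * e 0 + n 1 * e 1 + n 2 * e 2 + n 3 * e 3 = 2 * k := by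
      have : (n 0 * e 0 + n 1 * e 1 + n 2 * e 2 + n 3 * e 3 : ℝ) = 2 * k := by linarith
      exact_mod_cast this
    have : ∀ i, (n i * e i) % 2 = e i % 2 := by
      intro i; rw [Int.mul_emod, h i]; simp
    have h0 := this 0
    have h1 := this 1
    have h2 := this 2
    have h3 := this 3
    omega

lemma IsometricLattices.trans' {L M N : Submodule ℤ (E 4)} (h : IsometricLattices L M)
    (h' : IsometricLattices M N) : IsometricLattices L N := by
  obtain ⟨g, hg⟩ := h
  obtain ⟨g', hg'⟩ := h'
  refine ⟨g.trans g', ?_⟩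
  rw [← hg', ← hg, Set.image_image]
  rfl

/-- Reflection step. -/
lemma reflect (L : Submodule ℤ (E 4)) (hL : LatticeIsIntegral L) (hΛ : Λ4 ≤ L)
    (x : E 4) (hx : x ∈ L) (n : Fin 4 → ℤ) (hn : ∀ i, x i = n i / 2) (h : ∀ i, n i % 2 = 1)
    (s : ℤ) (hs : s = 1 ∨ s = -1) (k : ℤ) (hk : n 0 + n 1 + n 2 + s * n 3 = 2 * k)
    (hk2 : k % 2 = 1) :
    ∃ L' : Submodule ℤ (E 4), IsometricLattices L L' ∧ Λ4 ≤ L' ∧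
      ∀ x ∈ L', ∃ z, x = intVec z := by
  let u : E 4 := intVec ![1, 1, 1, s]
  let g : E 4 ≃ₗᵢ[ℝ] E 4 := (Submodule.span ℝ {u}).reflection
  have hss : (s : ℝ) * s = 1 := by rcases hs with rfl | rfl <;> norm_num
  have hu : ‖u‖ ^ 2 = 4 := by
    rw [← real_inner_self_eq_norm_sq, inner4]
    simp [u, intVec_apply, hss]; norm_num
  have hg : ∀ v i, g v i = (v 0 + v 1 + v 2 + s * v 3) / 2 * (![1, 1, 1, s] i : ℤ) - v i := by
    intro v i
    have : g v = (2 : ℝ) • ((⟪u, v⟫ / ‖u‖ ^ 2) • u) - v := by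
      have := Submodule.reflection_singleton_apply (𝕜 := ℝ) u v
      simpa [g, two_smul] using this
    rw [this, hu, inner4]
    simp [u, intVec_apply]
    ring
  let L' : Submodule ℤ (E 4) := L.map (g.toLinearEquiv.toLinearMap.restrictScalars ℤ)
  have hmem : ∀ v ∈ L, g v ∈ L' := fun v hv => ⟨v, hv, rfl⟩
  have hL' : LatticeIsIntegral L' := by
    rintro _ ⟨a, ha, rfl⟩ _ ⟨b, hb, rfl⟩
    obtain ⟨k, hk⟩ := hL a ha b hb
    exact ⟨k, by rw [← hk]; exact g.inner_map_map a b⟩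
  have hΛ' : Λ4 ≤ L' := by
    intro v hv
    have hgg : g (g v) = v := Submodule.reflection_reflection _ v
    rw [← hgg]
    refine hmem _ (hΛ ?_)
    obtain ⟨z, rfl, h1, h2, h3⟩ := (mem_Λ4 v).1 hv
    obtain ⟨t, ht⟩ : ∃ t, z 0 + z 1 + z 2 + s * z 3 = 2 * t := by
      refine ⟨(z 0 + z 1 + z 2 + s * z 3) / 2, ?_⟩
      rcases hs with rfl | rfl <;> omega
    have ht' : (z 0 + z 1 + z 2 + s * z 3 : ℝ) = 2 * t := by exact_mod_cast ht
    refine (mem_Λ4 _).2 ⟨fun i => t * ![1, 1, 1, s] i - z i, ?_, ?_⟩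
    · ext i
      rw [hg, intVec_apply]
      simp only [intVec_apply]
      rw [ht']; push_cast; ring
    · simp only [pΛ]
      rcases hs with rfl | rfl <;> simp <;> omega
  refine ⟨L', ⟨g, rfl⟩, hΛ', ?_⟩
  have hk' : (n 0 + n 1 + n 2 + s * n 3 : ℝ) = 2 * k := by exact_mod_cast hk
  have hgx : g x = intVec (fun i => (k * ![1, 1, 1, s] i - n i) / 2) := by
    ext i
    rw [hg, intVec_apply]
    simp only [hn]
    have e : k * ![1, 1, 1, s] i - n i = 2 * ((k * ![1, 1, 1, s] i - n i) / 2) := by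
      have := h i
      rcases hs with rfl | rfl <;> fin_cases i <;> simp at this ⊢ <;> omega
    have e' : (k * (![1, 1, 1, s] i : ℤ) - n i : ℝ)
      = 2 * (((k * ![1, 1, 1, s] i - n i) / 2 : ℤ) : ℝ) := by exact_mod_cast e
    linear_combination e' / 2 + hk' / 4 * (![1, 1, 1, s] i : ℤ)
  refine int_of_odd_mem L' hL' hΛ' _ (hgx ▸ hmem x hx) ?_
  have h0 := h 0
  have h1 := h 1
  have h2 := h 2
  have h3 := h 3
  rcases hs with rfl | rfl <;> simp <;> omega

lemma reduce (L : Submodule ℤ (E 4)) (hL : LatticeIsIntegral L) (hΛ : Λ4 ≤ L) :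
    ∃ L' : Submodule ℤ (E 4), IsometricLattices L L' ∧ Λ4 ≤ L' ∧
      ∀ x ∈ L', ∃ z, x = intVec z := by
  by_cases hall : ∀ x ∈ L, ∃ z, x = intVec z
  · exact ⟨L, ⟨LinearIsometryEquiv.refl ℝ _, by simp⟩, hΛ, hall⟩
  · push Not at hall
    obtain ⟨x, hx, hne⟩ := hall
    obtain ⟨n, hn, h | h⟩ := half L hL hΛ x hx
    · obtain ⟨z, hz⟩ := int_of_even x n hn h
      exact absurd hz (hne z)
    · have h0 := h 0
      have h1 := h 1
      have h2 := h 2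
      have h3 := h 3
      by_cases hodd : ((n 0 + n 1 + n 2 + n 3) / 2) % 2 = 1
      · exact reflect L hL hΛ x hx n hn h 1 (Or.inl rfl) ((n 0 + n 1 + n 2 + n 3) / 2)
          (by omega) hodd
      · exact reflect L hL hΛ x hx n hn h (-1) (Or.inr rfl) ((n 0 + n 1 + n 2 - n 3) / 2)
          (by omega) (by omega)

end Helpers

/-- Every integral lattice in `ℝ⁴` containing `Λ₄` is isometric to one of the six
lattices `Λ₄`, `Λ₄ + ℤ·ε1`, `Λ₄ + ℤ·ε1 + ℤ·ε2`, `(A₁)⁴`, `D₄`, `ℤ⁴`. -/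
theorem integral_lattices_containing_Λ4 (L : Submodule ℤ (E 4))
    (hL : LatticeIsIntegral L) (hΛ : Λ4 ≤ L) :
    IsometricLattices L Λ4 ∨
    IsometricLattices L (Λ4 ⊔ Submodule.span ℤ {εv 0}) ∨
    IsometricLattices L (Λ4 ⊔ Submodule.span ℤ {εv 0, εv 1}) ∨
    IsometricLattices L latA1 ∨
    IsometricLattices L latD4 ∨
    IsometricLattices L latZ4 := by
  obtain ⟨L', h, hΛ', hLZ⟩ := reduce L hL hΛ
  rcases int_case L' hΛ' hLZ with h' | h' | h' | h' | h' | h'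
  · exact Or.inl (h.trans' h')
  · exact Or.inr (Or.inl (h.trans' h'))
  · exact Or.inr (Or.inr (Or.inl (h.trans' h')))
  · exact Or.inr (Or.inr (Or.inr (Or.inl (h.trans' h'))))
  · exact Or.inr (Or.inr (Or.inr (Or.inr (Or.inl (h.trans' h')))))
  · exact Or.inr (Or.inr (Or.inr (Or.inr (Or.inr (h.trans' h')))))
end
end

section
/- The quotient group Λ5♯/Λ5 has exactly 128 elements, consisting of: the zero coset; exactly 10 cosets of minimal norm 1/2, each of order 4; exactly 32 cosets of minimal norm 5/8, each of order 8; exactly 20 cosets of minimal norm 1, each of order 2; exactly 20 cosets of minimal norm 3/2, each of order 4; exactly 32 cosets of minimal norm 13/8, each of order 8; exactly 11 cosets of minimal norm 2, each of order 2; and exactly 2 cosets of minimal norm 5/2, each of order 4. Here the minimal norm of a coset is the minimum of ‖x‖² over x in the coset. -/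
noncomputable section

open scoped RealInnerProductSpace

/-- The laminated lattice `Λ₅ = {√2·x : x ∈ ℤ⁵, ∑ x i even} ≅ √2·D₅`. -/
def Λ5 : Submodule ℤ (E 5) :=
  Submodule.span ℤ
    {v : E 5 | ∃ x : Fin 5 → ℤ, Even (x 0 + x 1 + x 2 + x 3 + x 4) ∧ v = Real.sqrt 2 • intVec x}

/-- The dual lattice `Λ♯ = {x : ⟪x,y⟫ ∈ ℤ for all y ∈ Λ}`. -/
def dualLattice {n : ℕ} (Λ : Submodule ℤ (E n)) : Submodule ℤ (E n) where
  carrier := {x | ∀ y ∈ Λ, ∃ k : ℤ, ⟪x, y⟫ = (k : ℝ)}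
  zero_mem' := fun y _ => ⟨0, by simp⟩
  add_mem' := by
    intro a b ha hb y hy
    obtain ⟨k, hk⟩ := ha y hy
    obtain ⟨l, hl⟩ := hb y hy
    exact ⟨k + l, by rw [inner_add_left, hk, hl]; push_cast; ring⟩
  smul_mem' := by
    intro c x hx y hy
    obtain ⟨k, hk⟩ := hx y hy
    refine ⟨c * k, ?_⟩
    rw [← Int.cast_smul_eq_zsmul ℝ c x, real_inner_smul_left, hk]
    push_cast
    ring

/-- The quotient abelian group `Λ♯/Λ`. -/
abbrev DualQuot {n : ℕ} (Λ : Submodule ℤ (E n)) :=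
  (dualLattice Λ) ⧸ (Λ.comap (dualLattice Λ).subtype)

/-- The coset `c ∈ Λ♯/Λ` has minimal norm `m`, i.e. `m` is the minimum of `‖x‖²`
over `x` in the coset `c`. -/
def CosetMinNorm {n : ℕ} (Λ : Submodule ℤ (E n)) (c : DualQuot Λ) (m : ℝ) : Prop :=
  IsLeast {r : ℝ | ∃ x : dualLattice Λ, Submodule.Quotient.mk x = c ∧ r = ‖(x : E n)‖ ^ 2} m

/-- Scaled coordinates: `φ a = a / (2√2)`. -/
def φ (a : Fin 5 → ℤ) : E 5 := (Real.sqrt 2 / 4) • intVec a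

theorem φ_apply (a : Fin 5 → ℤ) (i : Fin 5) : φ a i = Real.sqrt 2 / 4 * (a i : ℝ) := by
  simp [φ, intVec]

theorem φ_add (a b : Fin 5 → ℤ) : φ (a + b) = φ a + φ b := by
  ext i; simp [φ_apply]; ring

theorem φ_sub (a b : Fin 5 → ℤ) : φ (a - b) = φ a - φ b := by
  ext i; simp [φ_apply]; ring

theorem φ_zsmul (n : ℤ) (a : Fin 5 → ℤ) : φ (n • a) = n • φ a := by
  ext i
  rw [← Int.cast_smul_eq_zsmul ℝ n (φ a)]
  simp [φ_apply]; ring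

theorem φ_inj {a b : Fin 5 → ℤ} (h : φ a = φ b) : a = b := by
  funext i
  have h1 := congrArg (fun v : E 5 => v i) h
  simp only [φ_apply] at h1
  have h2 : Real.sqrt 2 / 4 ≠ 0 := by positivity
  exact_mod_cast mul_left_cancel₀ h2 h1

theorem φ_inner (a b : Fin 5 → ℤ) : ⟪φ a, φ b⟫ =
    ((a 0 * b 0 + a 1 * b 1 + a 2 * b 2 + a 3 * b 3 + a 4 * b 4 : ℤ) : ℝ) / 8 := by
  have h2 : Real.sqrt 2 * Real.sqrt 2 = 2 := Real.mul_self_sqrt (by norm_num)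
  simp only [PiLp.inner_apply, Fin.sum_univ_five, φ_apply, RCLike.inner_apply, conj_trivial]
  push_cast
  linear_combination ((a 0 * b 0 + a 1 * b 1 + a 2 * b 2 + a 3 * b 3 + a 4 * b 4 : ℝ)) / 16 * h2

/-- Squared length of an integer vector. -/
def sq5 (a : Fin 5 → ℤ) : ℤ := a 0 ^ 2 + a 1 ^ 2 + a 2 ^ 2 + a 3 ^ 2 + a 4 ^ 2

theorem φ_norm (a : Fin 5 → ℤ) : ‖φ a‖ ^ 2 = (sq5 a : ℝ) / 8 := by
  rw [← real_inner_self_eq_norm_sq, φ_inner, sq5]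
  push_cast; ring

/-- Membership in `4·D₅`. -/
abbrev K (a : Fin 5 → ℤ) : Prop :=
  (4 ∣ a 0 ∧ 4 ∣ a 1 ∧ 4 ∣ a 2 ∧ 4 ∣ a 3 ∧ 4 ∣ a 4) ∧ 8 ∣ a 0 + a 1 + a 2 + a 3 + a 4

/-- All coordinates have the same parity. -/
abbrev SP (a : Fin 5 → ℤ) : Prop :=
  2 ∣ a 1 - a 0 ∧ 2 ∣ a 2 - a 0 ∧ 2 ∣ a 3 - a 0 ∧ 2 ∣ a 4 - a 0

theorem φ_mem_Λ5_of {a : Fin 5 → ℤ} (h : K a) : φ a ∈ Λ5 := by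
  apply Submodule.subset_span
  obtain ⟨⟨h0, h1, h2, h3, h4⟩, hs⟩ := h
  refine ⟨fun i => a i / 4, ?_, ?_⟩
  · rw [Int.even_iff]; dsimp only; omega
  · have hd : ∀ i, 4 ∣ a i := by intro i; fin_cases i <;> assumption
    ext i
    obtain ⟨d, hd⟩ := hd i
    simp [φ_apply, intVec, hd]; ring

theorem mem_Λ5 {v : E 5} : v ∈ Λ5 ↔ ∃ a, K a ∧ v = φ a := by
  constructor
  · intro hv
    unfold Λ5 at hv
    induction hv using Submodule.span_induction with
    | mem x h =>
      obtain ⟨x, hx, rfl⟩ := h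
      rw [Int.even_iff] at hx
      refine ⟨fun i => 4 * x i, ?_, ?_⟩
      · unfold K; dsimp only; omega
      · ext i; simp [φ_apply, intVec]; ring
    | zero => exact ⟨0, by decide, by ext i; simp [φ_apply]⟩
    | add x y _ _ hx hy =>
      obtain ⟨a, ha, rfl⟩ := hx
      obtain ⟨b, hb, rfl⟩ := hy
      refine ⟨a + b, ?_, (φ_add a b).symm⟩
      simp only [K, Pi.add_apply] at *; omega
    | smul n x _ hx =>
      obtain ⟨a, ha, rfl⟩ := hx
      refine ⟨n • a, ?_, (φ_zsmul n a).symm⟩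
      obtain ⟨⟨h0, h1, h2, h3, h4⟩, hs⟩ := ha
      simp only [K, Pi.smul_apply, smul_eq_mul, ← mul_add]
      exact ⟨⟨h0.mul_left _, h1.mul_left _, h2.mul_left _, h3.mul_left _, h4.mul_left _⟩,
        hs.mul_left _⟩
  · rintro ⟨a, ha, rfl⟩
    exact φ_mem_Λ5_of ha

theorem φ_mem_Λ5 {a : Fin 5 → ℤ} : φ a ∈ Λ5 ↔ K a := by
  refine ⟨fun h => ?_, φ_mem_Λ5_of⟩
  obtain ⟨b, hb, h⟩ := mem_Λ5.1 h
  rwa [φ_inj h]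

theorem φ_mem_dual {a : Fin 5 → ℤ} (ha : SP a) : φ a ∈ dualLattice Λ5 := by
  intro y hy
  obtain ⟨b, ⟨⟨⟨d0, h0⟩, ⟨d1, h1⟩, ⟨d2, h2⟩, ⟨d3, h3⟩, ⟨d4, h4⟩⟩, hs⟩, rfl⟩ := mem_Λ5.1 hy
  obtain ⟨⟨c1, e1⟩, ⟨c2, e2⟩, ⟨c3, e3⟩, ⟨c4, e4⟩⟩ := ha
  obtain ⟨s, hs⟩ : ∃ s, d0 + d1 + d2 + d3 + d4 = 2 * s :=
    ⟨(d0 + d1 + d2 + d3 + d4) / 2, by omega⟩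
  refine ⟨a 0 * s + c1 * d1 + c2 * d2 + c3 * d3 + c4 * d4, ?_⟩
  rw [φ_inner]
  have : a 0 * b 0 + a 1 * b 1 + a 2 * b 2 + a 3 * b 3 + a 4 * b 4 =
      8 * (a 0 * s + c1 * d1 + c2 * d2 + c3 * d3 + c4 * d4) := by
    rw [h0, h1, h2, h3, h4]
    linear_combination 4 * d1 * e1 + 4 * d2 * e2 + 4 * d3 * e3 + 4 * d4 * e4 + 4 * a 0 * hs
  rw [this]; push_cast; ring

theorem exists_of_mem_dual {v : E 5} (hv : v ∈ dualLattice Λ5) : ∃ a, SP a ∧ v = φ a := by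
  have h2 : Real.sqrt 2 * Real.sqrt 2 = 2 := Real.mul_self_sqrt (by norm_num)
  have key : ∀ b : Fin 5 → ℤ, K b → ∃ k : ℤ,
      Real.sqrt 2 / 4 * (v 0 * b 0 + v 1 * b 1 + v 2 * b 2 + v 3 * b 3 + v 4 * b 4) = k := by
    intro b hb
    obtain ⟨k, hk⟩ := hv (φ b) (φ_mem_Λ5_of hb)
    refine ⟨k, ?_⟩
    rw [← hk]
    simp only [PiLp.inner_apply, Fin.sum_univ_five, φ_apply, RCLike.inner_apply, conj_trivial]
    ring
  obtain ⟨a0, h0⟩ := key ![8, 0, 0, 0, 0] (by decide)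
  obtain ⟨k1, h1⟩ := key ![-4, 4, 0, 0, 0] (by decide)
  obtain ⟨k2, h2'⟩ := key ![-4, 0, 4, 0, 0] (by decide)
  obtain ⟨k3, h3⟩ := key ![-4, 0, 0, 4, 0] (by decide)
  obtain ⟨k4, h4⟩ := key ![-4, 0, 0, 0, 4] (by decide)
  simp at h0 h1 h2' h3 h4
  refine ⟨![a0, a0 + 2 * k1, a0 + 2 * k2, a0 + 2 * k3, a0 + 2 * k4], ?_, ?_⟩
  · simp [SP]
  · ext i
    rw [φ_apply]
    fin_cases i <;> simp
    · rw [← h0]; linear_combination -(v 0 / 2) * h2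
    · rw [← h0, ← h1]; linear_combination -(v 1 / 2) * h2
    · rw [← h0, ← h2']; linear_combination -(v 2 / 2) * h2
    · rw [← h0, ← h3]; linear_combination -(v 3 / 2) * h2
    · rw [← h0, ← h4]; linear_combination -(v 4 / 2) * h2

/-- The class of `φ a`. -/
def cls (a : Fin 5 → ℤ) (ha : SP a) : DualQuot Λ5 :=
  Submodule.Quotient.mk ⟨φ a, φ_mem_dual ha⟩

theorem cls_eq {a b : Fin 5 → ℤ} (ha : SP a) (hb : SP b) : cls a ha = cls b hb ↔ K (a - b) := by
  unfold cls
  rw [Submodule.Quotient.eq, ← φ_mem_Λ5, φ_sub]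
  simp

theorem cls_nsmul {a : Fin 5 → ℤ} (ha : SP a) (n : ℕ) :
    n • cls a ha = 0 ↔ K ((n : ℤ) • a) := by
  unfold cls
  rw [← Submodule.Quotient.mk_smul, Submodule.Quotient.mk_eq_zero, ← φ_mem_Λ5, φ_zsmul]
  simp

theorem cls_surj (c : DualQuot Λ5) : ∃ a, ∃ ha : SP a, c = cls a ha := by
  obtain ⟨⟨v, hv⟩, rfl⟩ := Submodule.Quotient.mk_surjective _ c
  obtain ⟨a, ha, rfl⟩ := exists_of_mem_dual hv
  exact ⟨a, ha, rfl⟩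

theorem one_coord (m d : ℤ) (hm : |m| ≤ 2) : 0 ≤ 2 * d ^ 2 + m * d := by
  obtain ⟨h1, h2⟩ := abs_le.1 hm
  rcases lt_trichotomy d 0 with h | h | h
  · nlinarith [mul_nonneg (by omega : 0 ≤ -d) (by omega : 0 ≤ -(2 * d + m))]
  · subst h; simp
  · nlinarith [mul_nonneg (by omega : 0 ≤ d) (by omega : 0 ≤ 2 * d + m)]

theorem odd_coord (m d : ℤ) (hm : |m| ≤ 4) (hd : d ≠ 0) : 2 - |m| ≤ 2 * d ^ 2 + m * d := by
  have h1 : -(|m| * |d|) ≤ m * d := by rw [← abs_mul]; exact neg_abs_le _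
  have h2 : 1 ≤ |d| := Int.one_le_abs hd
  rw [← sq_abs d]
  nlinarith [mul_nonneg (by omega : 0 ≤ |d| - 1) (by omega : 0 ≤ 2 * |d| + 2 - |m|)]

theorem even_coord (m d : ℤ) (hm : |m| ≤ 4) (hd : d % 2 = 0) : 0 ≤ 2 * d ^ 2 + m * d := by
  by_cases h0 : d = 0
  · subst h0; simp
  have h1 : -(|m| * |d|) ≤ m * d := by rw [← abs_mul]; exact neg_abs_le _
  have h2 : 2 ≤ |d| := by rcases abs_cases d with h | h <;> omega
  rw [← sq_abs d]
  nlinarith [mul_nonneg (by omega : 0 ≤ |d|) (by omega : 0 ≤ 2 * |d| - |m|)]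

/-- Reducedness condition guaranteeing that `m` is a shortest vector in its coset. -/
abbrev Red (m : Fin 5 → ℤ) : Prop :=
  |m 0| ≤ 4 ∧ (|m 1| ≤ 2 ∧ |m 2| ≤ 2 ∧ |m 3| ≤ 2 ∧ |m 4| ≤ 2) ∧
  (|m 0| + |m 1| ≤ 4 ∧ |m 0| + |m 2| ≤ 4 ∧ |m 0| + |m 3| ≤ 4 ∧ |m 0| + |m 4| ≤ 4)

theorem sq5_le {m a : Fin 5 → ℤ} (hm : Red m) (h : K (a - m)) : sq5 m ≤ sq5 a := by
  obtain ⟨⟨⟨d0, h0⟩, ⟨d1, h1⟩, ⟨d2, h2⟩, ⟨d3, h3⟩, ⟨d4, h4⟩⟩, hs⟩ := h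
  simp only [Pi.sub_apply] at *
  obtain ⟨r0, ⟨r1, r2, r3, r4⟩, q1, q2, q3, q4⟩ := hm
  have e0 : a 0 = m 0 + 4 * d0 := by omega
  have e1 : a 1 = m 1 + 4 * d1 := by omega
  have e2 : a 2 = m 2 + 4 * d2 := by omega
  have e3 : a 3 = m 3 + 4 * d3 := by omega
  have e4 : a 4 = m 4 + 4 * d4 := by omega
  have hs' : (d0 + d1 + d2 + d3 + d4) % 2 = 0 := by omega
  have p1 := one_coord _ d1 r1
  have p2 := one_coord _ d2 r2
  have p3 := one_coord _ d3 r3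
  have p4 := one_coord _ d4 r4
  have main : 0 ≤ (2 * d0 ^ 2 + m 0 * d0) + (2 * d1 ^ 2 + m 1 * d1) + (2 * d2 ^ 2 + m 2 * d2)
      + (2 * d3 ^ 2 + m 3 * d3) + (2 * d4 ^ 2 + m 4 * d4) := by
    by_cases hd : d0 % 2 = 0
    · have := even_coord _ d0 r0 hd
      linarith
    · have p0 := odd_coord _ d0 r0 (by omega)
      have : d1 % 2 ≠ 0 ∨ d2 % 2 ≠ 0 ∨ d3 % 2 ≠ 0 ∨ d4 % 2 ≠ 0 := by omega
      rcases this with h | h | h | h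
      · have := odd_coord _ d1 (by linarith : |m 1| ≤ 4) (by omega); linarith
      · have := odd_coord _ d2 (by linarith : |m 2| ≤ 4) (by omega); linarith
      · have := odd_coord _ d3 (by linarith : |m 3| ≤ 4) (by omega); linarith
      · have := odd_coord _ d4 (by linarith : |m 4| ≤ 4) (by omega); linarith
  simp only [sq5, e0, e1, e2, e3, e4]
  nlinarith

/-- Index set of the cosets: parity, five bits, and one extra bit. -/
abbrev Idx := Fin 2 × (Fin 2 × Fin 2 × Fin 2 × Fin 2 × Fin 2) × Fin 2

/-- Invariant of a coset. -/
def bit (n : ℤ) : Fin 2 := if n % 2 = 0 then 0 else 1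

theorem bit_val (n : ℤ) : ((bit n).val : ℤ) = n % 2 := by
  unfold bit; split_ifs <;> simp <;> omega

def inv5 (a : Fin 5 → ℤ) : Idx :=
  (bit (a 0), (bit (a 0 / 2), bit (a 1 / 2), bit (a 2 / 2), bit (a 3 / 2), bit (a 4 / 2)),
    bit (a 0 / 4 + a 1 / 4 + a 2 / 4 + a 3 / 4 + a 4 / 4))

/-- Naive representative. -/
def rep : Idx → Fin 5 → ℤ := fun ⟨p, ⟨s0, s1, s2, s3, s4⟩, t⟩ =>
  ![p.val + 2 * s0.val + 4 * t.val, p.val + 2 * s1.val, p.val + 2 * s2.val, p.val + 2 * s3.val,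
    p.val + 2 * s4.val]

/-- Reduce into `{-1, 0, 1, 2}` modulo 4. -/
def red (n : ℤ) : ℤ := (n + 1) % 4 - 1

/-- Minimal representative. -/
def mrep (i : Idx) : Fin 5 → ℤ :=
  let a := rep i
  let b : Fin 5 → ℤ := ![red (a 0), red (a 1), red (a 2), red (a 3), red (a 4)]
  if K (a - b) then b
  else if b 0 % 2 = 1 then ![-3 * b 0, b 1, b 2, b 3, b 4]
  else if b 0 = 2 then ![-2, b 1, b 2, b 3, b 4]
  else if b 1 = 2 then ![b 0, -2, b 2, b 3, b 4]
  else if b 2 = 2 then ![b 0, b 1, -2, b 3, b 4]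
  else if b 3 = 2 then ![b 0, b 1, b 2, -2, b 4]
  else if b 4 = 2 then ![b 0, b 1, b 2, b 3, -2]
  else ![4, 0, 0, 0, 0]

theorem mrep_facts : ∀ i : Idx, SP (mrep i) ∧ Red (mrep i) ∧ K (rep i - mrep i) ∧
    inv5 (mrep i) = i := by decide +kernel

theorem inv5_congr {a b : Fin 5 → ℤ} (h : K (a - b)) : inv5 a = inv5 b := by
  simp only [K, Pi.sub_apply] at h
  have hb : ∀ m n : ℤ, m % 2 = n % 2 → bit m = bit n := by
    intro m n h; unfold bit; rw [h]
  simp only [inv5, Prod.mk.injEq]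
  refine ⟨hb _ _ ?_, ⟨hb _ _ ?_, hb _ _ ?_, hb _ _ ?_, hb _ _ ?_, hb _ _ ?_⟩, hb _ _ ?_⟩ <;> omega

theorem rep_inv5 {a : Fin 5 → ℤ} (h : SP a) : K (a - rep (inv5 a)) := by
  simp only [SP] at h
  simp [K, rep, inv5, bit_val]
  omega

theorem K_add {a b : Fin 5 → ℤ} (ha : K a) (hb : K b) : K (a + b) := by
  simp only [K, Pi.add_apply] at *; omega

/-- The parametrization of the cosets. -/
def f (i : Idx) : DualQuot Λ5 := cls (mrep i) (mrep_facts i).1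

theorem f_bij : Function.Bijective f := by
  constructor
  · intro i j h
    have := inv5_congr ((cls_eq _ _).1 h)
    rwa [(mrep_facts i).2.2.2, (mrep_facts j).2.2.2] at this
  · intro c
    obtain ⟨a, ha, rfl⟩ := cls_surj c
    refine ⟨inv5 a, Eq.symm ((cls_eq _ _).2 ?_)⟩
    have := K_add (rep_inv5 ha) (mrep_facts (inv5 a)).2.2.1
    simpa using this

theorem f_min (i : Idx) : CosetMinNorm Λ5 (f i) ((sq5 (mrep i) : ℝ) / 8) := by
  constructor
  · exact ⟨⟨φ (mrep i), φ_mem_dual (mrep_facts i).1⟩, rfl, (φ_norm _).symm⟩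
  · rintro r ⟨⟨v, hv⟩, hx, rfl⟩
    obtain ⟨a, ha, rfl⟩ := exists_of_mem_dual hv
    have h : K (a - mrep i) := (cls_eq ha (mrep_facts i).1).1 hx
    have := sq5_le (mrep_facts i).2.1 h
    simp only [φ_norm]
    have : (sq5 (mrep i) : ℝ) ≤ sq5 a := by exact_mod_cast this
    linarith

theorem f_min_iff (i : Idx) (m : ℝ) : CosetMinNorm Λ5 (f i) m ↔ (sq5 (mrep i) : ℝ) / 8 = m :=
  ⟨fun h => (f_min i).unique h, fun h => h ▸ f_min i⟩

/-- Order of a coset. -/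
def ord (a : Fin 5 → ℤ) : ℕ :=
  if K a then 1 else if K ((2 : ℤ) • a) then 2 else if K ((4 : ℤ) • a) then 4 else 8

theorem f_ord (i : Idx) : addOrderOf (f i) = ord (mrep i) := by
  have hn := cls_nsmul (mrep_facts i).1
  change ∀ n : ℕ, n • f i = 0 ↔ _ at hn
  have h2 : ∀ a : Fin 5 → ℤ, K a → K ((2 : ℤ) • a) := by
    intro a h; simp only [K, Pi.smul_apply, smul_eq_mul] at *; omega
  unfold ord
  split_ifs with h1 h3 h4
  · rw [AddMonoid.addOrderOf_eq_one_iff]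
    have := hn 1
    simp only [one_nsmul, Nat.cast_one, one_smul] at this
    exact this.2 h1
  · refine addOrderOf_eq_prime_pow (p := 2) (n := 0) (x := f i) ?_ ?_ |>.trans (by norm_num)
    · rw [hn]; simpa using h1
    · rw [hn]; simpa using h3
  · refine addOrderOf_eq_prime_pow (p := 2) (n := 1) (x := f i) ?_ ?_ |>.trans (by norm_num)
    · rw [hn]; simpa using h3
    · rw [hn]; exact h4
  · refine addOrderOf_eq_prime_pow (p := 2) (n := 2) (x := f i) ?_ ?_ |>.trans (by norm_num)
    · rw [hn]; exact h4
    · rw [hn]; simp only [K, Pi.smul_apply, smul_eq_mul]; push_cast; omega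

theorem count (m : ℝ) (k : ℤ) (hm : m = (k : ℝ) / 8) (o n : ℕ)
    (h : (Finset.univ.filter fun i : Idx => sq5 (mrep i) = k ∧ ord (mrep i) = o).card = n) :
    {c : DualQuot Λ5 | CosetMinNorm Λ5 c m ∧ addOrderOf c = o}.ncard = n := by
  have : {c : DualQuot Λ5 | CosetMinNorm Λ5 c m ∧ addOrderOf c = o} =
      f '' (Finset.univ.filter fun i : Idx => sq5 (mrep i) = k ∧ ord (mrep i) = o) := by
    ext c
    obtain ⟨i, rfl⟩ := f_bij.2 c
    rw [f_bij.1.mem_set_image]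
    have h8 : (sq5 (mrep i) : ℝ) / 8 = (k : ℝ) / 8 ↔ sq5 (mrep i) = k := by
      rw [div_left_inj' (by norm_num)]; norm_cast
    simp [f_min_iff, f_ord, hm, h8]
  rw [this, Set.ncard_image_of_injective _ f_bij.1, Set.ncard_coe_finset, h]

theorem table : ∀ i : Idx, ord (mrep i) = 1 ∨
    (sq5 (mrep i) = 4 ∧ ord (mrep i) = 4) ∨ (sq5 (mrep i) = 5 ∧ ord (mrep i) = 8) ∨
    (sq5 (mrep i) = 8 ∧ ord (mrep i) = 2) ∨ (sq5 (mrep i) = 12 ∧ ord (mrep i) = 4) ∨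
    (sq5 (mrep i) = 13 ∧ ord (mrep i) = 8) ∨ (sq5 (mrep i) = 16 ∧ ord (mrep i) = 2) ∨
    (sq5 (mrep i) = 20 ∧ ord (mrep i) = 4) := by decide +kernel

/-- The quotient `Λ₅♯/Λ₅` has exactly 128 elements: the zero coset, 10 cosets of minimal
norm 1/2 and order 4, 32 cosets of minimal norm 5/8 and order 8, 20 cosets of minimal
norm 1 and order 2, 20 cosets of minimal norm 3/2 and order 4, 32 cosets of minimal
norm 13/8 and order 8, 11 cosets of minimal norm 2 and order 2, and 2 cosets of minimal
norm 5/2 and order 4. -/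
theorem Λ5_dual_quotient_classes :
    Nat.card (DualQuot Λ5) = 128 ∧
    (∀ c : DualQuot Λ5, c = 0 ∨
      (CosetMinNorm Λ5 c (1/2) ∧ addOrderOf c = 4) ∨
      (CosetMinNorm Λ5 c (5/8) ∧ addOrderOf c = 8) ∨
      (CosetMinNorm Λ5 c 1 ∧ addOrderOf c = 2) ∨
      (CosetMinNorm Λ5 c (3/2) ∧ addOrderOf c = 4) ∨
      (CosetMinNorm Λ5 c (13/8) ∧ addOrderOf c = 8) ∨
      (CosetMinNorm Λ5 c 2 ∧ addOrderOf c = 2) ∨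
      (CosetMinNorm Λ5 c (5/2) ∧ addOrderOf c = 4)) ∧
    {c : DualQuot Λ5 | CosetMinNorm Λ5 c (1/2) ∧ addOrderOf c = 4}.ncard = 10 ∧
    {c : DualQuot Λ5 | CosetMinNorm Λ5 c (5/8) ∧ addOrderOf c = 8}.ncard = 32 ∧
    {c : DualQuot Λ5 | CosetMinNorm Λ5 c 1 ∧ addOrderOf c = 2}.ncard = 20 ∧
    {c : DualQuot Λ5 | CosetMinNorm Λ5 c (3/2) ∧ addOrderOf c = 4}.ncard = 20 ∧
    {c : DualQuot Λ5 | CosetMinNorm Λ5 c (13/8) ∧ addOrderOf c = 8}.ncard = 32 ∧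
    {c : DualQuot Λ5 | CosetMinNorm Λ5 c 2 ∧ addOrderOf c = 2}.ncard = 11 ∧
    {c : DualQuot Λ5 | CosetMinNorm Λ5 c (5/2) ∧ addOrderOf c = 4}.ncard = 2 := by
  refine ⟨?_, ?_, ?_, ?_, ?_, ?_, ?_, ?_, ?_⟩
  · rw [← Nat.card_congr (Equiv.ofBijective f f_bij)]
    simp
  · intro c
    obtain ⟨i, rfl⟩ := f_bij.2 c
    rw [← AddMonoid.addOrderOf_eq_one_iff]
    simp only [f_min_iff, f_ord]
    rcases table i with h | ⟨h, h'⟩ | ⟨h, h'⟩ | ⟨h, h'⟩ | ⟨h, h'⟩ | ⟨h, h'⟩ | ⟨h, h'⟩ | ⟨h, h'⟩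
    · exact Or.inl h
    all_goals rw [h, h']; norm_num
  · exact count _ 4 (by norm_num) _ _ (by decide +kernel)
  · exact count _ 5 (by norm_num) _ _ (by decide +kernel)
  · exact count _ 8 (by norm_num) _ _ (by decide +kernel)
  · exact count _ 12 (by norm_num) _ _ (by decide +kernel)
  · exact count _ 13 (by norm_num) _ _ (by decide +kernel)
  · exact count _ 16 (by norm_num) _ _ (by decide +kernel)
  · exact count _ 20 (by norm_num) _ _ (by decide +kernel)
end
end
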